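/- Let m ≥ 2, let R be an algebraic curvature tensor on ℝ^m, and let k ∈ ℕ. Then the Stiefel average of the function (X,Y) ↦ ⟨R(Y,X)X, Y⟩^k equals (1/[m+2k−2]_{2k}) · (2π)^{-m} ∫_{ℝ^m} ∫_{ℝ^m} e^{-(‖X‖²+‖Y‖²)/2} ⟨R(Y,X)X, Y⟩^k dY dX. (For an orthonormal pair (X,Y) the number ⟨R(Y,X)X,Y⟩ is the sectional curvature of the 2-plane spanned by X and Y, so this computes the k-th moment of the sectional curvature of R over the Grassmannian of 2-planes.) -/

import Mathlib

/-!
Put `f(X, Y) = ⟨R(Y,X)X, Y⟩ ^ k`. It is homogeneous of degree `2k` in each variable, and by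
skew-symmetry of `R` it is unchanged when a multiple of `X` is added to `Y`.

The main tool is `exists_radial_average`: averaging over the orthogonal group with its Haar measure
shows that a homogeneous function of degree `d` has, against every rotation-invariant measure, the
same integral as a universal constant times `‖x‖ ^ d`. Comparing the Hausdorff measure of the unit
sphere (finite and nonzero, `hausdorffMeasure_sphere_lt_top` and `hausdorffMeasure_sphere_pos`) with
the Gaussian measure turns spherical averages into Gaussian integrals divided by the radial moment
`∏_{j<k} (dim + 2j)` (`integral_gaussian_mul_norm_pow`, `sphere_average_eq`).

For a fixed unit vector `X` this applies to the unit sphere of `X^⊥`, of dimension parameter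
`m - 1`; invariance in the direction `X` replaces the Gaussian integral over `X^⊥` by the one over
the whole space (`fiber_average_eq`). The resulting function of `X` is again homogeneous of degree
`2k`, and the same comparison in dimension `m` handles the outer average. The two radial moments
multiply to `∏_{j<k} (m + 2j)(m - 1 + 2j)`, which is the falling factorial `[m+2k-2]_{2k}`
(`fall_eq_prod`).
-/

open MeasureTheory RealInnerProductSpace
open scoped Real

/-- The falling factorial `[x]_s = x(x−1)⋯(x−s+1)`. -/
noncomputable def fall (x : ℝ) (s : ℕ) : ℝ := ∏ j ∈ Finset.range s, (x - (j : ℝ))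

/-- An algebraic curvature tensor on a real inner product space `V`: a trilinear map
`(X,Y,Z) ↦ R X Y Z` that is antisymmetric in `X,Y`, gives skew-symmetric endomorphisms
`Z ↦ R X Y Z`, and satisfies the first Bianchi identity. -/
structure AlgCurvTensor (V : Type*) [NormedAddCommGroup V] [InnerProductSpace ℝ V] where
  R : V →ₗ[ℝ] V →ₗ[ℝ] V →ₗ[ℝ] V
  antisymm : ∀ X Y Z : V, R X Y Z = - R Y X Z
  skew : ∀ X Y Z W : V, ⟪R X Y Z, W⟫ = - ⟪R X Y W, Z⟫
  bianchi : ∀ X Y Z : V, R X Y Z + R Y Z X + R Z X Y = 0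

/-- The Stiefel average of a function `f(X,Y)` of orthonormal pairs in an `m`-dimensional
real inner product space: average over `X` in the unit sphere (with `(m−1)`-dimensional
Hausdorff measure) of the average of `f(X,·)` over the unit sphere of `X^⊥` (with its
`(m−2)`-dimensional Hausdorff measure). -/
noncomputable def stiefelAvg {V : Type*} [NormedAddCommGroup V] [InnerProductSpace ℝ V]
    [MeasurableSpace V] [BorelSpace V] (m : ℕ) (f : V → V → ℝ) : ℝ :=
  ((μH[(m : ℝ) - 1] (Metric.sphere (0 : V) 1)).toReal)⁻¹ *
    ∫ X in Metric.sphere (0 : V) 1,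
      (((μH[(m : ℝ) - 2] {Y : V | ‖Y‖ = 1 ∧ ⟪X, Y⟫ = 0}).toReal)⁻¹ *
        ∫ Y in {Y : V | ‖Y‖ = 1 ∧ ⟪X, Y⟫ = 0}, f X Y ∂(μH[(m : ℝ) - 2]))
      ∂(μH[(m : ℝ) - 1])

/-! ### Averaging over the orthogonal group -/

section Averaging

variable {W : Type*} [NormedAddCommGroup W] [InnerProductSpace ℝ W] [FiniteDimensional ℝ W]
  [MeasurableSpace W] [BorelSpace W]

omit [MeasurableSpace W] [BorelSpace W] in
lemma exists_bound_of_homogeneous (d : ℕ) (f : W → ℝ) (hf : Continuous f)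
    (hom : ∀ t : ℝ, 0 ≤ t → ∀ x, f (t • x) = t ^ d * f x) :
    ∃ C, ∀ x, |f x| ≤ C * ‖x‖ ^ d := by
  obtain ⟨C, hC⟩ := (isCompact_closedBall (0 : W) 1).exists_bound_of_continuousOn hf.continuousOn
  refine ⟨C, fun x => ?_⟩
  have hx : x = ‖x‖ • (‖x‖⁻¹ • x) := by
    by_cases h : x = 0
    · simp [h]
    · rw [smul_smul, mul_inv_cancel₀ (norm_ne_zero_iff.2 h), one_smul]
  have h1 : |f (‖x‖⁻¹ • x)| ≤ C := by
    refine hC _ ?_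
    rw [mem_closedBall_zero_iff, norm_smul, norm_inv, norm_norm]
    exact inv_mul_le_one
  conv_lhs => rw [hx, hom _ (norm_nonneg x), abs_mul, abs_of_nonneg (by positivity), mul_comm]
  gcongr

/-- Against every rotation-invariant measure `μ` and every radial weight `w`, a homogeneous function
`f` of degree `d` integrates like a fixed multiple `c` of `‖x‖ ^ d`. The constant `c` is the Haar
average of `f` over an orbit of a unit vector under the orthogonal group, and depends neither on
`μ` nor on `w`. -/
lemma exists_radial_average [Nontrivial W] (d : ℕ) (f : W → ℝ) (hf : Continuous f)
    (hom : ∀ t : ℝ, 0 ≤ t → ∀ x, f (t • x) = t ^ d * f x) :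
    ∃ c : ℝ, ∀ (μ : Measure W) [SFinite μ] (w : ℝ → ℝ), Continuous w →
      (∀ g : W ≃ₗᵢ[ℝ] W, MeasurePreserving g μ μ) →
      Integrable (fun x => w ‖x‖ * ‖x‖ ^ d) μ →
      ∫ x, w ‖x‖ * f x ∂μ = c * ∫ x, w ‖x‖ * ‖x‖ ^ d ∂μ := by
  let G := unitary (W →L[ℝ] W)
  let _ : MeasurableSpace G := borel G
  have : BorelSpace G := ⟨rfl⟩
  have : ProperSpace (W →L[ℝ] W) := FiniteDimensional.proper ℝ _
  have : CompactSpace G := by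
    refine isCompact_iff_compactSpace.1 (Metric.isCompact_of_isClosed_isBounded
      isClosed_unitary ?_)
    refine (Metric.isBounded_closedBall (x := (0 : W →L[ℝ] W)) (r := 1)).subset ?_
    intro u hu
    rw [mem_closedBall_zero_iff]
    refine u.opNorm_le_bound zero_le_one fun x => ?_
    rw [u.norm_map_of_mem_unitary hu, one_mul]
  let ν : Measure G := Measure.haar
  obtain ⟨C, hC⟩ := exists_bound_of_homogeneous d f hf hom
  obtain ⟨e, he⟩ := exists_norm_eq W zero_le_one
  -- acting by inverses lets left invariance of the Haar measure suffice below
  let act : G → W → W := fun g x => ((g⁻¹ : G) : W →L[ℝ] W) x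
  have hact : Continuous (fun p : G × W => act p.1 p.2) := by
    have h : Continuous (fun p : G × W => ((p.1⁻¹ : G) : W →L[ℝ] W)) :=
      continuous_subtype_val.comp (continuous_inv.comp continuous_fst)
    exact h.clm_apply continuous_snd
  have hnorm : ∀ g x, ‖act g x‖ = ‖x‖ := fun g x => Unitary.norm_map _ x
  -- a reflection carries `‖x‖ • e` to `x`, so the orbit average depends only on `‖x‖`
  have key : ∀ x, ∫ g, f (act g x) ∂ν = ‖x‖ ^ d * ∫ g, f (act g e) ∂ν := by
    intro x
    have hn : ‖‖x‖ • e‖ = ‖x‖ := by rw [norm_smul, he, norm_norm, mul_one]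
    let h₀ : G := Unitary.linearIsometryEquiv.symm
      (Submodule.reflection (ℝ ∙ (‖x‖ • e - x))ᗮ)
    have h₀x : (h₀ : W →L[ℝ] W) (‖x‖ • e) = x := Submodule.reflection_sub hn
    have step : ∀ g : G, f (act g (‖x‖ • e)) = f (act (h₀ * g) x) := by
      intro g
      have : act (h₀ * g) x = act g (‖x‖ • e) := by
        conv_lhs => rw [← h₀x]
        simp only [act]
        rw [← mul_apply_eq_comp, ← Submonoid.coe_mul, mul_inv_rev,
          inv_mul_cancel_right]
      rw [this]
    calc ∫ g, f (act g x) ∂ν = ∫ g, f (act (h₀ * g) x) ∂ν :=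
          (integral_mul_left_eq_self (fun g => f (act g x)) h₀).symm
      _ = ∫ g, ‖x‖ ^ d * f (act g e) ∂ν := by
          refine integral_congr_ae (Filter.Eventually.of_forall fun g => ?_)
          simp only
          rw [← step, show act g (‖x‖ • e) = ‖x‖ • act g e from map_smul _ _ _,
            hom _ (norm_nonneg x)]
      _ = _ := integral_const_mul _ _
  obtain ⟨A, key⟩ : ∃ A, ∀ x, ∫ g, f (act g x) ∂ν = ‖x‖ ^ d * A := ⟨_, key⟩
  have hM : ν.real Set.univ ≠ 0 := by
    rw [Measure.real, ENNReal.toReal_ne_zero]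
    exact ⟨(Measure.measure_univ_ne_zero).2 (NeZero.ne ν), measure_ne_top _ _⟩
  refine ⟨(ν.real Set.univ)⁻¹ * A, fun μ _ w hw hμ hint => ?_⟩
  have hI : Integrable (fun p : G × W => w ‖p.2‖ * f (act p.1 p.2)) (ν.prod μ) := by
    have h1 : Integrable (fun p : G × W => C * (w ‖p.2‖ * ‖p.2‖ ^ d)) (ν.prod μ) :=
      (hint.comp_snd ν).const_mul C
    refine h1.mono (Continuous.aestronglyMeasurable ?_) (Filter.Eventually.of_forall fun p => ?_)
    · exact (hw.comp continuous_snd.norm).mul (hf.comp hact)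
    · have h2 := hC (act p.1 p.2)
      rw [hnorm] at h2
      simp only [Real.norm_eq_abs, abs_mul]
      have h3 : C * ‖p.2‖ ^ d ≤ |C| * |‖p.2‖ ^ d| := by
        rw [← abs_mul]; exact le_abs_self _
      nlinarith [abs_nonneg (w ‖p.2‖)]
  have hswap := integral_integral_swap (f := fun g x => w ‖x‖ * f (act g x)) hI
  have hL : ∀ g, ∫ x, w ‖x‖ * f (act g x) ∂μ = ∫ x, w ‖x‖ * f x ∂μ := by
    intro g
    have h := (hμ (Unitary.linearIsometryEquiv g⁻¹)).integral_comp
      (Unitary.linearIsometryEquiv g⁻¹).toHomeomorph.measurableEmbedding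
      (fun x => w ‖x‖ * f x)
    rw [← h]
    refine integral_congr_ae (Filter.Eventually.of_forall fun x => ?_)
    simp only [LinearIsometryEquiv.norm_map]
    rfl
  simp only [hL, integral_const, smul_eq_mul, integral_const_mul, key] at hswap
  have e1 : ∀ x : W, w ‖x‖ * (‖x‖ ^ d * A) = A * (w ‖x‖ * ‖x‖ ^ d) := fun x => by ring
  simp only [e1, integral_const_mul] at hswap
  rw [mul_assoc, ← hswap, inv_mul_cancel_left₀ hM]

end Averaging

/-! ### Radial Gaussian moments -/

section Gaussian

variable {W : Type*} [NormedAddCommGroup W] [InnerProductSpace ℝ W] [FiniteDimensional ℝ W]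
  [MeasurableSpace W] [BorelSpace W]

lemma integrable_gaussian_mul_norm_pow [Nontrivial W] (d : ℕ) :
    Integrable (fun x : W => Real.exp (-‖x‖ ^ 2 / 2) * ‖x‖ ^ d) := by
  refine (integrable_fun_norm_addHaar volume
    (f := fun r : ℝ => Real.exp (-r ^ 2 / 2) * r ^ d)).2 ?_
  have h := integrableOn_rpow_mul_exp_neg_mul_sq (b := 1 / 2) (by norm_num)
    (s := ((Module.finrank ℝ W - 1 + d : ℕ) : ℝ)) (by
      have : (0 : ℝ) ≤ ((Module.finrank ℝ W - 1 + d : ℕ) : ℝ) := Nat.cast_nonneg _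
      linarith)
  refine h.congr_fun (fun x _ => ?_) measurableSet_Ioi
  simp only [Real.rpow_natCast, smul_eq_mul, pow_add]
  rw [show -(1 / 2) * x ^ 2 = -x ^ 2 / 2 by ring]
  ring

/-- The functional equation of the Gamma function, in the form of a recursion for half-line
Gaussian moments. -/
lemma integral_pow_mul_gaussian_succ (q : ℕ) :
    ∫ y in Set.Ioi (0 : ℝ), y ^ (q + 2) * Real.exp (-y ^ 2 / 2) =
      ((q : ℝ) + 1) * ∫ y in Set.Ioi (0 : ℝ), y ^ q * Real.exp (-y ^ 2 / 2) := by
  have key : ∀ n : ℕ, ∫ y in Set.Ioi (0 : ℝ), y ^ n * Real.exp (-y ^ 2 / 2) =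
      (1 / 2 : ℝ) ^ (-((n : ℝ) + 1) / 2) * (1 / 2) * Real.Gamma (((n : ℝ) + 1) / 2) := by
    intro n
    rw [← integral_rpow_mul_exp_neg_mul_rpow (p := 2) (q := n) (b := 1 / 2) (by norm_num)
      (by have : (0 : ℝ) ≤ n := Nat.cast_nonneg _
          linarith) (by norm_num)]
    refine setIntegral_congr_fun measurableSet_Ioi (fun x _ => ?_)
    simp only [Real.rpow_natCast, Real.rpow_two]
    rw [show -(1 / 2) * x ^ 2 = -x ^ 2 / 2 by ring]
  rw [key, key]
  push_cast
  have hq : ((q : ℝ) + 1) / 2 ≠ 0 := by positivity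
  rw [show ((q : ℝ) + 2 + 1) / 2 = (q + 1) / 2 + 1 by ring, Real.Gamma_add_one hq,
    show -((q : ℝ) + 2 + 1) / 2 = -(q + 1) / 2 - 1 by ring,
    Real.rpow_sub_one (by norm_num)]
  ring

lemma integral_gaussian_mul_norm_pow [Nontrivial W] (k : ℕ) :
    ∫ x : W, Real.exp (-‖x‖ ^ 2 / 2) * ‖x‖ ^ (2 * k) =
      (∏ j ∈ Finset.range k, ((Module.finrank ℝ W : ℝ) + 2 * j)) *
        (2 * Real.pi) ^ ((Module.finrank ℝ W : ℝ) / 2) := by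
  induction k with
  | zero =>
    have h := GaussianFourier.integral_rexp_neg_mul_sq_norm (V := W) (b := 1 / 2) (by norm_num)
    simp only [mul_zero, pow_zero, mul_one, Finset.range_zero, Finset.prod_empty, one_mul]
    rw [show 2 * Real.pi = Real.pi / (1 / 2) by ring, ← h]
    congr 1; ext x; congr 1; ring
  | succ k ih =>
    have hn : 1 ≤ Module.finrank ℝ W := Module.finrank_pos
    have hpolar : ∀ d : ℕ, ∫ x : W, Real.exp (-‖x‖ ^ 2 / 2) * ‖x‖ ^ d =
        Module.finrank ℝ W • (volume : Measure W).real (Metric.ball 0 1) •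
          ∫ y in Set.Ioi (0 : ℝ), y ^ (Module.finrank ℝ W - 1 + d) * Real.exp (-y ^ 2 / 2) := by
      intro d
      rw [integral_fun_norm_addHaar volume (fun r : ℝ => Real.exp (-r ^ 2 / 2) * r ^ d)]
      congr 3; ext y; rw [smul_eq_mul, pow_add]; ring
    rw [Finset.prod_range_succ, mul_right_comm, ← ih, hpolar, hpolar,
      show Module.finrank ℝ W - 1 + 2 * (k + 1) = Module.finrank ℝ W - 1 + 2 * k + 2 by ring,
      integral_pow_mul_gaussian_succ]
    push_cast [Nat.cast_sub hn]
    simp only [smul_eq_mul, nsmul_eq_mul]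
    ring

end Gaussian

/-! ### Hausdorff measure of the unit sphere -/

section Sphere

variable {W : Type*} [NormedAddCommGroup W] [InnerProductSpace ℝ W] [FiniteDimensional ℝ W]
  [MeasurableSpace W] [BorelSpace W]

/-- Each cap of height more than `1/2` is the image of a ball of its equatorial hyperplane under the
Lipschitz map `y ↦ (y + v) / ‖y + v‖`; finitely many caps cover the sphere. -/
lemma hausdorffMeasure_sphere_lt_top {n : ℕ} (hn : Module.finrank ℝ W = n + 1) :
    μH[(n : ℝ)] (Metric.sphere (0 : W) 1) < ⊤ := by
  have : Fact (Module.finrank ℝ W = n + 1) := ⟨hn⟩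
  refine (isCompact_sphere (0 : W) 1).measure_lt_top_of_nhdsWithin fun v hv => ?_
  have hv1 : ‖v‖ = 1 := by simpa using hv
  have hv0 : v ≠ 0 := by rintro rfl; simp at hv1
  let H := (ℝ ∙ v)ᗮ
  have hH : Module.finrank ℝ H = n := Submodule.finrank_orthogonal_span_singleton hv0
  -- the open cap where the height over the equator is more than one half
  let U : Set W := {x | 1 / 2 < ⟪v, x⟫}
  have hU : U ∈ nhdsWithin v (Metric.sphere (0 : W) 1) := by
    refine mem_nhdsWithin_of_mem_nhds (IsOpen.mem_nhds ?_ ?_)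
    · exact isOpen_lt continuous_const (by fun_prop)
    · simp only [U, Set.mem_ofPred_eq, real_inner_self_eq_norm_sq, hv1]; norm_num
  refine ⟨Metric.sphere (0 : W) 1 ∩ U, Filter.inter_mem self_mem_nhdsWithin hU, ?_⟩
  let φ : H → W := fun y => ‖(y : W) + v‖⁻¹ • ((y : W) + v)
  have hge : ∀ y : H, 1 ≤ ‖(y : W) + v‖ := by
    intro y
    have h0 : ⟪(y : W), v⟫ = 0 := Submodule.mem_orthogonal_singleton_iff_inner_left.1 y.2
    have h1 : ‖(y : W) + v‖ ^ 2 = ‖(y : W)‖ ^ 2 + 1 := by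
      rw [norm_add_sq_real, h0, hv1]; ring
    nlinarith [norm_nonneg ((y : W) + v), sq_nonneg ‖(y : W)‖]
  have hlip : LipschitzWith 2 φ := by
    refine LipschitzWith.of_dist_le_mul fun y z => ?_
    set a := (y : W) + v with ha
    set b := (z : W) + v with hb
    have ha1 : 1 ≤ ‖a‖ := hge y
    have hb1 : 1 ≤ ‖b‖ := hge z
    have e1 : φ y - φ z = ‖a‖⁻¹ • (a - b) + (‖a‖⁻¹ - ‖b‖⁻¹) • b := by
      simp only [φ, ← ha, ← hb]; module
    have e2 : ‖‖a‖⁻¹ • (a - b)‖ ≤ ‖a - b‖ := by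
      rw [norm_smul, norm_inv, norm_norm]
      exact mul_le_of_le_one_left (norm_nonneg _) (inv_le_one_of_one_le₀ ha1)
    have e3 : ‖(‖a‖⁻¹ - ‖b‖⁻¹) • b‖ ≤ ‖a - b‖ := by
      rw [norm_smul, Real.norm_eq_abs]
      have : (‖a‖⁻¹ - ‖b‖⁻¹) = (‖b‖ - ‖a‖) * (‖a‖⁻¹ * ‖b‖⁻¹) := by
        have : ‖a‖ ≠ 0 := by positivity
        have : ‖b‖ ≠ 0 := by positivity
        field_simp
      rw [this, abs_mul, abs_of_nonneg (a := ‖a‖⁻¹ * ‖b‖⁻¹) (by positivity), mul_assoc, mul_assoc,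
        inv_mul_cancel₀ (by positivity), mul_one, abs_sub_comm]
      exact (mul_le_of_le_one_right (abs_nonneg _) (inv_le_one_of_one_le₀ ha1)).trans
        (abs_norm_sub_norm_le a b)
    have e4 : dist y z = ‖a - b‖ := by
      rw [dist_eq_norm, ha, hb, add_sub_add_right_eq_sub]; rfl
    rw [dist_eq_norm, e1, e4]
    refine (norm_add_le _ _).trans ?_
    rw [NNReal.coe_ofNat]
    linarith
  have hsub : Metric.sphere (0 : W) 1 ∩ U ⊆ φ '' Metric.closedBall 0 3 := by
    rintro x ⟨hx, hxU⟩
    have hx1 : ‖x‖ = 1 := by simpa using hx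
    set t := ⟪v, x⟫ with ht
    have ht2 : 1 / 2 < t := hxU
    have ht0 : 0 < t := by linarith
    let y : H := ⟨t⁻¹ • x - v, by
      rw [Submodule.mem_orthogonal_singleton_iff_inner_right, inner_sub_right,
        real_inner_smul_right, ← ht, inv_mul_cancel₀ ht0.ne', real_inner_self_eq_norm_sq, hv1]
      norm_num⟩
    refine ⟨y, ?_, ?_⟩
    · rw [mem_closedBall_zero_iff]
      refine (norm_sub_le (t⁻¹ • x) v).trans ?_
      rw [norm_smul, hx1, hv1, Real.norm_eq_abs, abs_of_pos (by positivity)]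
      have : t⁻¹ ≤ 2 := by
        rw [inv_le_comm₀ ht0 (by norm_num)]; linarith
      linarith
    · simp only [φ, y, sub_add_cancel]
      rw [norm_smul, hx1, Real.norm_eq_abs, abs_of_pos (by positivity), mul_one, inv_inv,
        smul_smul, mul_inv_cancel₀ ht0.ne', one_smul]
  have hball : μH[(n : ℝ)] (Metric.closedBall (0 : H) 3) < ⊤ := by
    rw [← hH]
    exact (isCompact_closedBall _ _).measure_lt_top
  refine (measure_mono hsub).trans_lt ?_
  refine (hlip.hausdorffMeasure_image_le (Nat.cast_nonneg n) _).trans_lt ?_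
  exact ENNReal.mul_lt_top (by simp) hball

/-- Orthogonal projection to a hyperplane is `1`-Lipschitz and maps the sphere onto a set
containing the unit ball. -/
lemma hausdorffMeasure_sphere_pos {n : ℕ} (hn : Module.finrank ℝ W = n + 1) :
    0 < μH[(n : ℝ)] (Metric.sphere (0 : W) 1) := by
  have : Fact (Module.finrank ℝ W = n + 1) := ⟨hn⟩
  have : Nontrivial W := Module.nontrivial_of_finrank_pos (R := ℝ) (by omega)
  obtain ⟨v, hv1⟩ := exists_norm_eq W zero_le_one
  have hv0 : v ≠ 0 := by rintro rfl; simp at hv1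
  let H := (ℝ ∙ v)ᗮ
  have hH : Module.finrank ℝ H = n := Submodule.finrank_orthogonal_span_singleton hv0
  have hsub : Metric.ball (0 : H) 1 ⊆ H.orthogonalProjectionOnto '' Metric.sphere (0 : W) 1 := by
    intro y hy
    rw [mem_ball_zero_iff] at hy
    have h0 : ⟪(y : W), v⟫ = 0 := Submodule.mem_orthogonal_singleton_iff_inner_left.1 y.2
    have hy2 : 0 ≤ 1 - ‖y‖ ^ 2 := by nlinarith [norm_nonneg y]
    refine ⟨y + √(1 - ‖y‖ ^ 2) • v, ?_, ?_⟩
    · rw [mem_sphere_zero_iff_norm]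
      have : ‖(y : W) + √(1 - ‖y‖ ^ 2) • v‖ ^ 2 = 1 := by
        rw [norm_add_sq_real, real_inner_smul_right, h0, norm_smul, hv1, Real.norm_eq_abs,
          mul_one, sq_abs, Real.sq_sqrt hy2, Submodule.coe_norm]
        ring
      nlinarith [norm_nonneg ((y : W) + √(1 - ‖y‖ ^ 2) • v)]
    · rw [map_add, map_smul, Submodule.orthogonalProjectionOnto_mem_subspace_eq_self,
        Submodule.orthogonalProjectionOnto_orthogonalComplement_singleton_eq_zero, smul_zero,
        add_zero]
  have hball : 0 < μH[(n : ℝ)] (Metric.ball (0 : H) 1) := by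
    rw [← hH]
    exact Metric.measure_ball_pos _ _ one_pos
  exact hball.trans_le ((measure_mono hsub).trans
    (hausdorffMeasure_orthogonalProjectionOnto_le H _ _ (Nat.cast_nonneg n)))

/-- The normalized average over the unit sphere of a homogeneous function of degree `2k` is its
Gaussian integral divided by the Gaussian integral of `‖x‖ ^ (2k)`, because both the Hausdorff
measure of the sphere and the Lebesgue measure are rotation invariant. -/
lemma sphere_average_eq {n : ℕ} (hn : Module.finrank ℝ W = n + 1) (k : ℕ)
    (f : W → ℝ) (hf : Continuous f)
    (hom : ∀ t : ℝ, 0 ≤ t → ∀ x, f (t • x) = t ^ (2 * k) * f x) :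
    (μH[(n : ℝ)] (Metric.sphere (0 : W) 1)).toReal⁻¹ *
        ∫ x in Metric.sphere (0 : W) 1, f x ∂μH[(n : ℝ)] =
      ((∏ j ∈ Finset.range k, ((n : ℝ) + 1 + 2 * j)) * (2 * Real.pi) ^ (((n : ℝ) + 1) / 2))⁻¹ *
        ∫ x : W, Real.exp (-‖x‖ ^ 2 / 2) * f x := by
  have : Nontrivial W := Module.nontrivial_of_finrank_pos (R := ℝ) (by omega)
  obtain ⟨c, hc⟩ := exists_radial_average (2 * k) f hf hom
  set S := Metric.sphere (0 : W) 1 with hS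
  have hSm : MeasurableSet S := Metric.isClosed_sphere.measurableSet
  have hfin : μH[(n : ℝ)] S ≠ ⊤ := (hausdorffMeasure_sphere_lt_top hn).ne
  have hpos : (μH[(n : ℝ)] S).toReal ≠ 0 :=
    ENNReal.toReal_ne_zero.2 ⟨(hausdorffMeasure_sphere_pos hn).ne', hfin⟩
  have hfm : IsFiniteMeasure ((μH[(n : ℝ)] : Measure W).restrict S) :=
    isFiniteMeasure_restrict.2 hfin
  have hone : ∀ x ∈ S, (1 : ℝ) * ‖x‖ ^ (2 * k) = 1 := fun x hx => by
    rw [mem_sphere_zero_iff_norm.1 hx, one_pow, one_mul]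
  have h1 := hc ((μH[(n : ℝ)] : Measure W).restrict S) (fun _ => 1) continuous_const
    (fun g => by
      have h := (g.toIsometryEquiv.measurePreserving_hausdorffMeasure (n : ℝ)).restrict_preimage hSm
      convert h using 2
      · rfl
      ext x
      simp only [Set.mem_preimage, hS, mem_sphere_zero_iff_norm]
      rw [← g.norm_map x]
      rfl)
    (by
      refine (integrable_const (1 : ℝ)).congr ?_
      filter_upwards [ae_restrict_mem hSm] with x hx using (hone x hx).symm)
  have h2 := hc volume (fun r => Real.exp (-r ^ 2 / 2)) (by fun_prop)
    (fun g => g.measurePreserving) (integrable_gaussian_mul_norm_pow _)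
  rw [setIntegral_congr_fun hSm hone] at h1
  simp only [one_mul, integral_const, smul_eq_mul, mul_one, measureReal_restrict_apply_univ] at h1
  rw [integral_gaussian_mul_norm_pow, hn] at h2
  push_cast at h2
  have hP : (∏ j ∈ Finset.range k, ((n : ℝ) + 1 + 2 * j)) * (2 * Real.pi) ^ (((n : ℝ) + 1) / 2)
      ≠ 0 := by
    have : 0 < ∏ j ∈ Finset.range k, ((n : ℝ) + 1 + 2 * j) :=
      Finset.prod_pos fun j _ => by positivity
    have := Real.pi_pos
    positivity
  rw [h1, h2, Measure.real]
  field_simp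

end Sphere

/-! ### Reduction of the Stiefel average to Gaussian integrals -/

section Stiefel

variable {V : Type*} [NormedAddCommGroup V] [InnerProductSpace ℝ V] [FiniteDimensional ℝ V]
  [MeasurableSpace V] [BorelSpace V]

/-- If `f` does not see the component of its argument along `X`, Gaussian integration over that
component only contributes the factor `√(2π)`. -/
lemma integral_gaussian_eq_integral_orthogonal {X : V} (hX : X ≠ 0) (f : V → ℝ)
    (hinv : ∀ (t : ℝ) (Y : V), f (t • X + Y) = f Y) :
    ∫ Y : V, Real.exp (-‖Y‖ ^ 2 / 2) * f Y =
      (2 * Real.pi) ^ ((1 : ℝ) / 2) *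
        ∫ y : (ℝ ∙ X)ᗮ, Real.exp (-‖y‖ ^ 2 / 2) * f y := by
  let K : Submodule ℝ V := ℝ ∙ X
  have hmp : MeasurePreserving ((MeasurableEquiv.toLp 2 (K × Kᗮ)).symm ∘
      K.orthogonalDecomposition) volume volume :=
    (WithLp.volume_preserving_symm_measurableEquiv_toLp_prod K Kᗮ).comp
      K.orthogonalDecomposition.measurePreserving
  have hemb : MeasurableEmbedding ((MeasurableEquiv.toLp 2 (K × Kᗮ)).symm ∘
      K.orthogonalDecomposition) :=
    (MeasurableEquiv.toLp 2 (K × Kᗮ)).symm.measurableEmbedding.comp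
      K.orthogonalDecomposition.toHomeomorph.measurableEmbedding
  have h := hmp.integral_comp hemb (fun p : K × Kᗮ =>
    Real.exp (-‖p.1‖ ^ 2 / 2) * (Real.exp (-‖p.2‖ ^ 2 / 2) * f p.2))
  have hprod : ∫ p : K × Kᗮ, Real.exp (-‖p.1‖ ^ 2 / 2) * (Real.exp (-‖p.2‖ ^ 2 / 2) * f p.2) =
      (∫ a : K, Real.exp (-‖a‖ ^ 2 / 2)) *
        ∫ b : Kᗮ, Real.exp (-‖b‖ ^ 2 / 2) * f b :=
    integral_prod_mul (fun a : K => Real.exp (-‖a‖ ^ 2 / 2))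
      (fun b : Kᗮ => Real.exp (-‖b‖ ^ 2 / 2) * f b)
  have hK : ∫ a : K, Real.exp (-‖a‖ ^ 2 / 2) = (2 * Real.pi) ^ ((1 : ℝ) / 2) := by
    have h1 := GaussianFourier.integral_rexp_neg_mul_sq_norm (V := K) (b := 1 / 2) (by norm_num)
    rw [show Module.finrank ℝ K = 1 from finrank_span_singleton hX, Nat.cast_one] at h1
    rw [show 2 * Real.pi = Real.pi / (1 / 2) by ring, ← h1]
    congr 1; ext x; congr 1; ring
  rw [hprod, hK] at h
  rw [← h]
  congr 1; ext Y
  obtain ⟨a, ha⟩ : ∃ a : K, a = K.orthogonalProjectionOnto Y := ⟨_, rfl⟩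
  obtain ⟨b, hb⟩ : ∃ b : Kᗮ, b = Kᗮ.orthogonalProjectionOnto Y := ⟨_, rfl⟩
  have hY : (a : V) + b = Y := by
    rw [ha, hb]
    simp
  have hab : ⟪(a : V), (b : V)⟫ = 0 := Submodule.inner_right_of_mem_orthogonal a.2 b.2
  have hn : ‖Y‖ ^ 2 = ‖a‖ ^ 2 + ‖b‖ ^ 2 := by
    rw [← hY, norm_add_sq_real, hab, Submodule.coe_norm, Submodule.coe_norm]; ring
  have hf : f Y = f b := by
    obtain ⟨t, ht⟩ := Submodule.mem_span_singleton.1 a.2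
    rw [← hY, ← ht, hinv]
  have e1 : ((MeasurableEquiv.toLp 2 (K × Kᗮ)).symm ∘ K.orthogonalDecomposition) Y = (a, b) := by
    rw [ha, hb]; simp
  simp only [e1]
  rw [hn, hf, ← mul_assoc, ← Real.exp_add]
  congr 2; ring

/-- The average over the unit sphere of `X^⊥`, an isometric copy of the unit sphere of an
`(n+1)`-dimensional Euclidean space, expressed as a Gaussian integral over all of `V`. -/
lemma fiber_average_eq {n : ℕ} (hn : Module.finrank ℝ V = n + 2) (k : ℕ) {X : V} (hX : ‖X‖ = 1)
    (f : V → ℝ) (hf : Continuous f)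
    (hom : ∀ t : ℝ, 0 ≤ t → ∀ Y, f (t • Y) = t ^ (2 * k) * f Y)
    (hinv : ∀ (t : ℝ) (Y : V), f (t • X + Y) = f Y) :
    (μH[(n : ℝ)] {Y : V | ‖Y‖ = 1 ∧ ⟪X, Y⟫ = 0}).toReal⁻¹ *
        ∫ Y in {Y : V | ‖Y‖ = 1 ∧ ⟪X, Y⟫ = 0}, f Y ∂μH[(n : ℝ)] =
      ((∏ j ∈ Finset.range k, ((n : ℝ) + 1 + 2 * j)) * (2 * Real.pi) ^ (((n : ℝ) + 2) / 2))⁻¹ *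
        ∫ Y : V, Real.exp (-‖Y‖ ^ 2 / 2) * f Y := by
  have hX0 : X ≠ 0 := by rintro rfl; simp at hX
  have : Fact (Module.finrank ℝ V = n + 1 + 1) := ⟨hn⟩
  let H := (ℝ ∙ X)ᗮ
  have hH : Module.finrank ℝ H = n + 1 := Submodule.finrank_orthogonal_span_singleton hX0
  have hiso : Isometry ((↑) : H → V) := isometry_subtype_coe
  have himg : {Y : V | ‖Y‖ = 1 ∧ ⟪X, Y⟫ = 0} = (↑) '' Metric.sphere (0 : H) 1 := by
    ext Y
    simp only [Set.mem_ofPred_eq, Set.mem_image, mem_sphere_zero_iff_norm]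
    constructor
    · rintro ⟨h1, h2⟩
      exact ⟨⟨Y, Submodule.mem_orthogonal_singleton_iff_inner_right.2 h2⟩, h1, rfl⟩
    · rintro ⟨y, h1, rfl⟩
      exact ⟨h1, Submodule.mem_orthogonal_singleton_iff_inner_right.1 y.2⟩
  have hemb : MeasurableEmbedding ((↑) : H → V) :=
    (Submodule.closed_of_finiteDimensional H).isClosedEmbedding_subtypeVal.measurableEmbedding
  have hint : ∫ Y in ((↑) '' Metric.sphere (0 : H) 1 : Set V), f Y ∂μH[(n : ℝ)] =
      ∫ y in Metric.sphere (0 : H) 1, f y ∂μH[(n : ℝ)] := by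
    have h1 := hemb.setIntegral_map (μ := μH[(n : ℝ)]) f ((↑) '' Metric.sphere (0 : H) 1 : Set V)
    rw [hiso.map_hausdorffMeasure (Or.inl (Nat.cast_nonneg n)), Measure.restrict_restrict
      (hemb.measurableSet_image.2 Metric.isClosed_sphere.measurableSet),
      Set.inter_eq_left.2 (Set.image_subset_range _ _),
      Set.preimage_image_eq _ Subtype.val_injective] at h1
    exact h1
  rw [himg, hint, hiso.hausdorffMeasure_image (Or.inl (Nat.cast_nonneg n)),
    sphere_average_eq hH k (fun y : H => f y) (by fun_prop) (fun t ht y => hom t ht y),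
    integral_gaussian_eq_integral_orthogonal hX0 f hinv,
    show ((n : ℝ) + 2) / 2 = (n + 1) / 2 + 1 / 2 by ring, Real.rpow_add (by positivity)]
  have hpi : (2 * Real.pi) ^ ((1 : ℝ) / 2) ≠ 0 := by positivity
  rw [← mul_assoc _ _ (∫ y : (ℝ ∙ X)ᗮ, _)]
  congr 1
  rw [← mul_assoc, mul_inv _ ((2 * Real.pi) ^ ((1 : ℝ) / 2)), inv_mul_cancel_right₀ hpi]

/-- Gaussian integration in the second variable preserves continuity in the first one; this makes
`sphere_average_eq` applicable to the outer integral. -/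
lemma continuous_gaussian_integral [Nontrivial V] (d : ℕ) (f : V → V → ℝ)
    (hf : Continuous (fun p : V × V => f p.1 p.2)) (C : ℝ)
    (hC : ∀ X Y, |f X Y| ≤ C * ‖X‖ ^ d * ‖Y‖ ^ d) :
    Continuous fun X => ∫ Y : V, Real.exp (-‖Y‖ ^ 2 / 2) * f X Y := by
  refine continuous_iff_continuousAt.2 fun X₀ => ?_
  refine continuousAt_of_dominated
    (bound := fun Y => |C| * (‖X₀‖ + 1) ^ d * (Real.exp (-‖Y‖ ^ 2 / 2) * ‖Y‖ ^ d)) ?_ ?_ ?_ ?_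
  · refine Filter.Eventually.of_forall fun X => Continuous.aestronglyMeasurable ?_
    have : Continuous fun Y => f X Y := hf.comp (by fun_prop : Continuous fun Y => (X, Y))
    fun_prop
  · filter_upwards [Metric.closedBall_mem_nhds X₀ one_pos] with X hX
    refine Filter.Eventually.of_forall fun Y => ?_
    have hXn : ‖X‖ ≤ ‖X₀‖ + 1 := by
      have h1 : ‖X - X₀‖ ≤ 1 := by rwa [← dist_eq_norm]
      have := norm_le_norm_add_norm_sub' X X₀
      linarith
    have h2 : |f X Y| ≤ |C| * (‖X₀‖ + 1) ^ d * ‖Y‖ ^ d := by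
      refine (hC X Y).trans ?_
      gcongr
      exact le_abs_self C
    rw [Real.norm_eq_abs, abs_mul, Real.abs_exp]
    calc Real.exp (-‖Y‖ ^ 2 / 2) * |f X Y|
        ≤ Real.exp (-‖Y‖ ^ 2 / 2) * (|C| * (‖X₀‖ + 1) ^ d * ‖Y‖ ^ d) := by gcongr
      _ = _ := by ring
  · exact (integrable_gaussian_mul_norm_pow d).const_mul _
  · refine Filter.Eventually.of_forall fun Y => Continuous.continuousAt ?_
    have : Continuous fun X => f X Y := hf.comp (by fun_prop : Continuous fun X => (X, Y))
    fun_prop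

/-- The moment formula for an arbitrary continuous `f` that is homogeneous of degree `2k` in each
variable and invariant under `Y ↦ tX + Y`. -/
lemma stiefelAvg_eq_gaussian {n : ℕ} (hn : Module.finrank ℝ V = n + 2) (k : ℕ)
    (f : V → V → ℝ) (hf : Continuous (fun p : V × V => f p.1 p.2)) (C : ℝ)
    (hC : ∀ X Y, |f X Y| ≤ C * ‖X‖ ^ (2 * k) * ‖Y‖ ^ (2 * k))
    (hom₁ : ∀ (t : ℝ) (X Y : V), f (t • X) Y = t ^ (2 * k) * f X Y)
    (hom₂ : ∀ (t : ℝ) (X Y : V), f X (t • Y) = t ^ (2 * k) * f X Y)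
    (hinv : ∀ (t : ℝ) (X Y : V), f X (t • X + Y) = f X Y) :
    stiefelAvg (n + 2) f =
      (∏ j ∈ Finset.range k, (((n : ℝ) + 2 + 2 * j) * ((n : ℝ) + 1 + 2 * j)))⁻¹ *
        ((2 * Real.pi) ^ (-((n : ℝ) + 2)) *
          ∫ X : V, Real.exp (-‖X‖ ^ 2 / 2) * ∫ Y : V, Real.exp (-‖Y‖ ^ 2 / 2) * f X Y) := by
  have : Nontrivial V := Module.nontrivial_of_finrank_pos (R := ℝ) (by omega)
  let F : V → ℝ := fun X => ∫ Y : V, Real.exp (-‖Y‖ ^ 2 / 2) * f X Y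
  have hF : Continuous F := continuous_gaussian_integral _ f hf C hC
  have hFhom : ∀ t : ℝ, 0 ≤ t → ∀ X, F (t • X) = t ^ (2 * k) * F X := by
    intro t _ X
    simp only [F, ← integral_const_mul]
    congr 1; ext Y; rw [hom₁]; ring
  have hfib : ∀ X ∈ Metric.sphere (0 : V) 1, _ = _ := fun X hX =>
    fiber_average_eq hn k (mem_sphere_zero_iff_norm.1 hX) (f X)
      (hf.comp (by fun_prop : Continuous fun Y => (X, Y))) (fun t _ Y => hom₂ t X Y)
      (fun t Y => hinv t X Y)
  have hout := sphere_average_eq (n := n + 1) hn k F hF hFhom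
  unfold stiefelAvg
  rw [show (((n + 2 : ℕ) : ℝ) - 1) = ((n + 1 : ℕ) : ℝ) by push_cast; ring,
    show (((n + 2 : ℕ) : ℝ) - 2) = (n : ℝ) by push_cast; ring,
    setIntegral_congr_fun Metric.isClosed_sphere.measurableSet hfib, integral_const_mul,
    mul_left_comm, hout, Finset.prod_mul_distrib,
    show -((n : ℝ) + 2) = -((n + 2) / 2 + (n + 2) / 2) by ring,
    Real.rpow_neg (by positivity), Real.rpow_add (by positivity)]
  push_cast
  simp only [F, add_assoc, mul_inv, one_add_one_eq_two]
  ring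

end Stiefel

/-- Pairing consecutive factors of the falling factorial separates the radial moments in dimensions
`m = x + 2` and `m - 1 = x + 1`. -/
lemma fall_eq_prod (x : ℝ) (k : ℕ) :
    fall (x + 2 * k) (2 * k) =
      ∏ j ∈ Finset.range k, ((x + 2 + 2 * j) * (x + 1 + 2 * j)) := by
  induction k with
  | zero => simp [fall]
  | succ k ih =>
    rw [Finset.prod_range_succ, ← ih]
    unfold fall
    rw [show 2 * (k + 1) = 2 * k + 1 + 1 by ring, Finset.prod_range_succ', Finset.prod_range_succ']
    have : ∀ j : ℕ, x + 2 * ((k + 1 : ℕ) : ℝ) - ((j + 1 + 1 : ℕ) : ℝ) = x + 2 * k - j := by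
      intro j; push_cast; ring
    simp only [this]
    push_cast
    ring

/-- In finite dimension a trilinear map is automatically continuous, and homogeneity turns a bound on the
product of the unit balls into a global one. -/
lemma continuous_and_bound_of_trilinear {V : Type*} [NormedAddCommGroup V] [InnerProductSpace ℝ V]
    [FiniteDimensional ℝ V] (R : V →ₗ[ℝ] V →ₗ[ℝ] V →ₗ[ℝ] V) :
    (Continuous fun p : V × V => ⟪R p.2 p.1 p.1, p.2⟫) ∧
      ∃ C : ℝ, ∀ X Y, |⟪R Y X X, Y⟫| ≤ C * ‖X‖ ^ 2 * ‖Y‖ ^ 2 := by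
  let e : (V →ₗ[ℝ] V) →ₗ[ℝ] (V →L[ℝ] V) := LinearMap.toContinuousLinearMap.toLinearMap
  let e' : (V →ₗ[ℝ] V →L[ℝ] V) →ₗ[ℝ] (V →L[ℝ] V →L[ℝ] V) :=
    LinearMap.toContinuousLinearMap.toLinearMap
  let T : V →ₗ[ℝ] V →L[ℝ] V →L[ℝ] V := e' ∘ₗ R.compr₂ e
  obtain ⟨B, hB⟩ : ∃ B : V →L[ℝ] V →L[ℝ] V →L[ℝ] V, ∀ X Y Z, R X Y Z = B X Y Z :=
    ⟨LinearMap.toContinuousLinearMap T, fun X Y Z => rfl⟩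
  have hcont : Continuous fun p : V × V => ⟪R p.2 p.1 p.1, p.2⟫ := by
    simp only [hB]
    fun_prop
  refine ⟨hcont, ?_⟩
  obtain ⟨C, hC⟩ := ((isCompact_closedBall (0 : V) 1).prod
    (isCompact_closedBall (0 : V) 1)).exists_bound_of_continuousOn hcont.continuousOn
  refine ⟨C, fun X Y => ?_⟩
  have hsplit : ∀ x : V, x = ‖x‖ • (‖x‖⁻¹ • x) := fun x => by
    by_cases h : x = 0
    · simp [h]
    · rw [smul_smul, mul_inv_cancel₀ (norm_ne_zero_iff.2 h), one_smul]
  have hball : ∀ x : V, ‖x‖⁻¹ • x ∈ Metric.closedBall (0 : V) 1 := fun x => by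
    rw [mem_closedBall_zero_iff, norm_smul, norm_inv, norm_norm]
    exact inv_mul_le_one
  have h1 := hC (‖X‖⁻¹ • X, ‖Y‖⁻¹ • Y) ⟨hball X, hball Y⟩
  have hom : ∀ (s t : ℝ) (U W : V),
      ⟪R (t • W) (s • U) (s • U), t • W⟫ = s ^ 2 * t ^ 2 * ⟪R W U U, W⟫ := fun s t U W => by
    simp only [map_smul, LinearMap.smul_apply, real_inner_smul_left, real_inner_smul_right]
    ring
  have h2 := hom ‖X‖ ‖Y‖ (‖X‖⁻¹ • X) (‖Y‖⁻¹ • Y)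
  rw [← hsplit X, ← hsplit Y] at h2
  rw [h2, abs_mul, abs_of_nonneg (by positivity), mul_comm, mul_assoc C]
  gcongr
  exact h1

/-- The `k`-th moment of the sectional curvature of an algebraic curvature tensor `R` on
`ℝ^m`, i.e. the Stiefel average of `⟨R(Y,X)X,Y⟩^k`, equals the Gaussian double integral
of `⟨R(Y,X)X,Y⟩^k` divided by the falling factorial `[m+2k−2]_{2k}`. -/
theorem sectional_curvature_moments (m : ℕ) (hm : 2 ≤ m)
    (Rc : AlgCurvTensor (EuclideanSpace ℝ (Fin m))) (k : ℕ) :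
    stiefelAvg m (fun X Y => ⟪Rc.R Y X X, Y⟫ ^ k) =
      (fall ((m : ℝ) + 2 * k - 2) (2 * k))⁻¹ *
        ((2 * Real.pi) ^ (-(m : ℝ)) *
          ∫ X : EuclideanSpace ℝ (Fin m), ∫ Y : EuclideanSpace ℝ (Fin m),
            Real.exp (-(‖X‖ ^ 2 + ‖Y‖ ^ 2) / 2) * ⟪Rc.R Y X X, Y⟫ ^ k) := by
  obtain ⟨n, rfl⟩ : ∃ n, m = n + 2 := ⟨m - 2, by omega⟩
  obtain ⟨hcont, C, hC⟩ := continuous_and_bound_of_trilinear Rc.R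
  -- skew-symmetry of `R` in both pairs of slots makes the quadratic form blind to adding a multiple
  -- of `X` to `Y`
  have hXX : ∀ X Z, Rc.R X X Z = 0 := fun X Z => by
    have h2 : (2 : ℝ) • Rc.R X X Z = 0 := by
      rw [two_smul]
      exact add_eq_zero_iff_eq_neg.2 (Rc.antisymm X X Z)
    exact (smul_eq_zero.1 h2).resolve_left two_ne_zero
  have hkill : ∀ X Y Z, ⟪Rc.R X Y Z, Z⟫ = 0 := fun X Y Z => self_eq_neg.1 (Rc.skew X Y Z Z)
  rw [stiefelAvg_eq_gaussian (n := n) (by simp) k _ (hcont.pow k) (C ^ k) ?_ ?_ ?_ ?_]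
  · rw [show ((n + 2 : ℕ) : ℝ) + 2 * k - 2 = n + 2 * k by push_cast; ring, fall_eq_prod]
    push_cast
    congr 3; ext X
    rw [← integral_const_mul]
    congr 1; ext Y
    rw [← mul_assoc, ← Real.exp_add]
    congr 2; ring
  · intro X Y
    rw [abs_pow, pow_mul, pow_mul, ← mul_pow, ← mul_pow]
    exact pow_le_pow_left₀ (abs_nonneg _) (hC X Y) k
  · intro t X Y
    rw [pow_mul, ← mul_pow]
    simp only [map_smul, LinearMap.smul_apply, real_inner_smul_left]
    ring
  · intro t X Y
    rw [pow_mul, ← mul_pow]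
    simp only [map_smul, LinearMap.smul_apply, real_inner_smul_left, real_inner_smul_right]
    ring
  · intro t X Y
    simp only [map_add, map_smul, LinearMap.add_apply, LinearMap.smul_apply, hXX, smul_zero,
      zero_add, inner_add_right, real_inner_smul_right, hkill, mul_zero]
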